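/- Let G be a finite group, N a normal subgroup, χ ∈ Irr(G), and ψ ∈ Irr(N) a constituent of the restriction of χ to N. Then χ(1)/ψ(1) divides the index [G : N]. -/

import Mathlib

open scoped Classical

/-- An endomorphism of finite order of a finite-dimensional complex space is diagonalizable. -/
theorem Module.End.exists_basis_eigenvectors_of_pow_eq_one {V : Type*} [AddCommGroup V]
    [Module ℂ V] [FiniteDimensional ℂ V] {f : Module.End ℂ V} {m : ℕ} (hm : m ≠ 0)
    (hf : f ^ m = 1) :
    ∃ (ι : Type) (_ : Fintype ι) (b : Module.Basis ι ℂ V) (μ : ι → ℂ),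
      ∀ i, f (b i) = μ i • b i := by
  have hss : f.IsSemisimple := by
    refine Module.End.isSemisimple_of_squarefree_aeval_eq_zero
      (p := (Polynomial.X ^ m - 1 : Polynomial ℂ)) ?_ (by simp [hf])
    exact (Polynomial.X_pow_sub_one_separable_iff.2 (by exact_mod_cast hm)).squarefree
  have hint : DirectSum.IsInternal fun μ : ℂ ↦ f.eigenspace μ :=
    DirectSum.isInternal_submodule_of_iSupIndep_of_iSup_eq_top f.eigenspaces_iSupIndep
      hss.iSup_eigenspace_eq_top
  let b := hint.collectedBasis fun μ ↦ Module.finBasis ℂ (f.eigenspace μ)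
  have := Module.Finite.finite_basis b
  exact ⟨_, Fintype.ofFinite _, b, Sigma.fst, fun i ↦
    Module.End.mem_eigenspace_iff.1 (hint.collectedBasis_mem _ _)⟩

theorem LinearMap.trace_eq_sum_of_basis_eigenvectors {ι V : Type*} [Fintype ι] [AddCommGroup V]
    [Module ℂ V] {f : Module.End ℂ V} (b : Module.Basis ι ℂ V) {μ : ι → ℂ}
    (h : ∀ i, f (b i) = μ i • b i) : LinearMap.trace ℂ V f = ∑ i, μ i := by
  rw [LinearMap.trace_eq_matrix_trace ℂ b, Matrix.trace]
  simp [LinearMap.toMatrix_apply, h]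

namespace Representation

section

variable {k G H V : Type*} [Field k] [Monoid G] [Monoid H] [AddCommGroup V] [Module k V]

theorem IsIrreducible.nontrivial (ρ : Representation k G V) [IsIrreducible ρ] : Nontrivial V := by
  by_contra hn
  rw [not_nontrivial_iff_subsingleton] at hn
  exact bot_ne_top (α := Subrepresentation ρ)
    (Subrepresentation.toSubmodule_injective (Subsingleton.elim _ _))

theorem IsIrreducible.of_forall_eq_top {ρ : Representation k G V} [Nontrivial V]
    (h : ∀ X : Subrepresentation ρ, X.toSubmodule ≠ ⊥ → X.toSubmodule = ⊤) : IsIrreducible ρ where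
  exists_pair_ne := ⟨⊥, ⊤, fun h ↦ bot_ne_top (α := Submodule k V)
    (congrArg Subrepresentation.toSubmodule h)⟩
  eq_bot_or_eq_top X := by
    by_cases hX : X.toSubmodule = ⊥
    · exact .inl (Subrepresentation.toSubmodule_injective hX)
    · exact .inr (Subrepresentation.toSubmodule_injective (h X hX))

theorem IsIrreducible.comp_of_surjective (ρ : Representation k G V) [IsIrreducible ρ]
    {φ : H →* G} (hφ : Function.Surjective φ) :
    IsIrreducible (MonoidHom.comp ρ φ : Representation k H V) := by
  have := IsIrreducible.nontrivial ρ
  refine .of_forall_eq_top fun X hX ↦ ?_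
  let Y : Subrepresentation ρ := ⟨X.toSubmodule, fun g v hv ↦ by
    obtain ⟨h, rfl⟩ := hφ g
    exact X.apply_mem_toSubmodule h hv⟩
  obtain h | h := eq_bot_or_eq_top Y
  · exact absurd (congrArg Subrepresentation.toSubmodule h) hX
  · exact congrArg Subrepresentation.toSubmodule h

end

/-- Schur's lemma for linear endomorphisms of a complex representation. -/
theorem exists_smul_eq_of_commute {G V : Type*} [Monoid G] [AddCommGroup V] [Module ℂ V]
    [FiniteDimensional ℂ V] (ρ : Representation ℂ G V) [IsIrreducible ρ] (f : Module.End ℂ V)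
    (hf : ∀ g v, f (ρ g v) = ρ g (f v)) : ∃ c : ℂ, c • (1 : Module.End ℂ V) = f := by
  let f' : IntertwiningMap ρ ρ := ⟨f, fun g ↦ LinearMap.ext (hf g)⟩
  obtain ⟨c, hc⟩ := IsIrreducible.algebraMap_intertwiningMap_bijective_of_isAlgClosed.2 f'
  exact ⟨c, congrArg IntertwiningMap.toLinearMap hc⟩

variable {G V : Type*} [Group G] [Finite G] [AddCommGroup V] [Module ℂ V] [FiniteDimensional ℂ V]
  (ρ : Representation ℂ G V)

theorem exists_basis_eigenvectors (g : G) :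
    ∃ (ι : Type) (_ : Fintype ι) (b : Module.Basis ι ℂ V) (μ : ι → ℂ),
      (∀ i, ρ g (b i) = μ i • b i) ∧ ∀ i, μ i ^ Nat.card G = 1 := by
  have hf : ρ g ^ Nat.card G = 1 := by rw [← map_pow, pow_card_eq_one', map_one]
  obtain ⟨ι, hι, b, μ, h⟩ :=
    Module.End.exists_basis_eigenvectors_of_pow_eq_one Nat.card_pos.ne' hf
  refine ⟨ι, hι, b, μ, h, fun i ↦ ?_⟩
  have hp : ∀ m : ℕ, (ρ g ^ m) (b i) = μ i ^ m • b i := by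
    intro m
    induction m with
    | zero => simp
    | succ m ih => rw [pow_succ, Module.End.mul_apply, h, map_smul, ih, smul_smul, pow_succ']
  have := hp (Nat.card G)
  rw [hf, Module.End.one_apply] at this
  exact smul_left_injective ℂ (b.ne_zero i) (by simpa using this.symm)

theorem isIntegral_character (g : G) : IsIntegral ℤ (ρ.character g) := by
  obtain ⟨ι, _, b, μ, h, hμ⟩ := ρ.exists_basis_eigenvectors g
  rw [character, LinearMap.trace_eq_sum_of_basis_eigenvectors b h]
  exact IsIntegral.sum _ fun i _ ↦ IsIntegral.of_pow Nat.card_pos (hμ i ▸ isIntegral_one)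

theorem star_character (g : G) : starRingEnd ℂ (ρ.character g) = ρ.character g⁻¹ := by
  obtain ⟨ι, _, b, μ, h, hμ⟩ := ρ.exists_basis_eigenvectors g
  have hμ0 (i) : μ i ≠ 0 := by
    intro h0
    simpa [h0, Nat.card_pos.ne'] using hμ i
  have hinv (i) : ρ g⁻¹ (b i) = (μ i)⁻¹ • b i := by
    rw [eq_inv_smul_iff₀ (hμ0 i), ← map_smul, ← h, ← Module.End.mul_apply, ← map_mul]
    simp
  rw [character, character, LinearMap.trace_eq_sum_of_basis_eigenvectors b h,
    LinearMap.trace_eq_sum_of_basis_eigenvectors b hinv, map_sum]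
  refine Finset.sum_congr rfl fun i _ ↦ ?_
  rw [Complex.inv_eq_conj]
  exact Complex.norm_eq_one_of_pow_eq_one (hμ i) Nat.card_pos.ne'

/-- The degree of an irreducible representation divides the index of any subgroup that acts by
scalars. -/
theorem finrank_dvd_index [IsIrreducible ρ] (K : Subgroup G)
    (hK : ∀ k ∈ K, ∃ c : ℂ, ρ k = c • 1) : Module.finrank ℂ V ∣ K.index := by
  have := Fintype.ofFinite G
  have : Invertible (Nat.card G : ℂ) :=
    invertibleOfNonzero (by exact_mod_cast Nat.card_pos.ne')
  have := IsIrreducible.nontrivial ρ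
  have hV : Module.finrank ℂ V ≠ 0 := Module.finrank_pos.ne'
  let F : G → Module.End ℂ V := fun g ↦ ρ.character g⁻¹ • ρ g
  have hF (g : G) (k : K) : F (g * k) = F g := by
    obtain ⟨c, hc⟩ := hK k k.2
    have hc' : c • ρ (k : G)⁻¹ = 1 := by
      have := map_mul ρ (k : G)⁻¹ k
      rw [inv_mul_cancel, map_one, hc] at this
      simpa using this.symm
    have h1 : ρ.character g⁻¹ = c * ρ.character (g * k)⁻¹ := by
      rw [mul_inv_rev, character, character, ← smul_eq_mul, ← map_smul, map_mul,
        ← smul_mul_assoc, hc', one_mul]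
    simp only [F]
    rw [h1, map_mul, hc]
    simp [smul_smul, mul_comm]
  let S : Module.End ℂ V := ∑ x : G ⧸ K, F x.out
  have hS : ∑ g, F g = (Nat.card K : ℂ) • S := by
    have hbij : Function.Bijective fun p : (G ⧸ K) × K ↦ p.1.out * (p.2 : G) := by
      refine ⟨fun p q h ↦ ?_, fun g ↦ ?_⟩
      · have h1 : p.1 = q.1 := by
          simpa [QuotientGroup.mk_mul_of_mem] using congrArg (QuotientGroup.mk : G → G ⧸ K) h
        exact Prod.ext h1 (by simpa [h1] using h)
      · obtain ⟨k, hk⟩ := QuotientGroup.mk_out_eq_mul K g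
        exact ⟨(g, k⁻¹), by simp [hk]⟩
    rw [← hbij.sum_comp, Fintype.sum_prod_type, Finset.smul_sum]
    refine Finset.sum_congr rfl fun x _ ↦ ?_
    rw [Finset.sum_congr rfl fun k _ ↦ hF x.out k]
    simp [← Nat.cast_smul_eq_nsmul ℂ]
  have hK0 : (Nat.card K : ℂ) ≠ 0 := by exact_mod_cast Nat.card_pos.ne'
  have hcomm (y : G) : ρ y * S = S * ρ y := by
    have : ρ y * ∑ g, F g = (∑ g, F g) * ρ y := by
      rw [Finset.mul_sum, Finset.sum_mul, ← (MulAut.conj y).toEquiv.sum_comp fun g ↦ F g * ρ y]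
      refine Finset.sum_congr rfl fun g _ ↦ ?_
      have : ρ.character (y * g * y⁻¹)⁻¹ = ρ.character g⁻¹ := by
        rw [← char_conj ρ g⁻¹ y, conj_inv]
      simp only [F, MulEquiv.toEquiv_eq_coe, EquivLike.coe_coe, MulAut.conj_apply, this]
      simp [← map_mul]
    rwa [hS, mul_smul_comm, smul_mul_assoc, smul_right_inj hK0] at this
  obtain ⟨c, hc⟩ := ρ.exists_smul_eq_of_commute S
    fun y ↦ LinearMap.congr_fun (hcomm y).symm
  have hint : IsIntegral ℤ c := by
    let φ := MonoidAlgebra.lift (integralClosure ℤ ℂ) (Module.End ℂ V) G ρ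
    have hx : IsIntegral (integralClosure ℤ ℂ) (φ (∑ x : G ⧸ K,
      MonoidAlgebra.single x.out ⟨ρ.character (x.out)⁻¹, ρ.isIntegral_character _⟩)) :=
      (Algebra.IsIntegral.isIntegral _).map φ
    have hφ : φ (∑ x : G ⧸ K, MonoidAlgebra.single x.out
        ⟨ρ.character (x.out)⁻¹, ρ.isIntegral_character _⟩) = algebraMap ℂ _ c := by
      rw [map_sum, Algebra.algebraMap_eq_smul_one, hc]
      refine Finset.sum_congr rfl fun x _ ↦ ?_
      rw [MonoidAlgebra.lift_single]
      rfl
    rw [hφ, isIntegral_algebraMap_iff (algebraMap ℂ (Module.End ℂ V)).injective] at hx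
    exact isIntegral_trans _ hx
  have htr : c * Module.finrank ℂ V = K.index := by
    have h1 : (Nat.card G : ℂ)⁻¹ * ∑ g : G, ρ.character g * ρ.character g⁻¹ = 1 := by
      rw [card_inv_mul_sum_char_mul_char_eq_finrank, IsIrreducible.finrank_intertwiningMap_self,
        Nat.cast_one]
    have h2 := congrArg (LinearMap.trace ℂ V) hS
    rw [← hc, map_sum, map_smul, map_smul, LinearMap.trace_one] at h2
    have h3 : ∑ g, LinearMap.trace ℂ V (F g) = ∑ g : G, ρ.character g * ρ.character g⁻¹ :=
      Finset.sum_congr rfl fun g _ ↦ by simp [F, character, mul_comm]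
    rw [inv_mul_eq_one₀ (by exact_mod_cast Nat.card_pos.ne'), ← h3, h2,
      ← K.card_mul_index, Nat.cast_mul, smul_eq_mul, smul_eq_mul] at h1
    exact (mul_left_cancel₀ hK0 h1).symm
  have hq : c = algebraMap ℚ ℂ (K.index / Module.finrank ℂ V) := by
    rw [map_div₀, map_natCast, map_natCast, ← htr, mul_div_cancel_right₀ _ (by exact_mod_cast hV)]
  rw [hq, isIntegral_algebraMap_iff (algebraMap ℚ ℂ).injective,
    IsIntegrallyClosed.isIntegral_iff] at hint
  obtain ⟨z, hz⟩ := hint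
  rw [eq_div_iff (by exact_mod_cast hV), eq_intCast] at hz
  have hz' : z * Module.finrank ℂ V = K.index := by exact_mod_cast hz
  exact Int.natCast_dvd_natCast.1 ⟨z, by rw [← hz', mul_comm]⟩

end Representation

section IsotypicDimension

variable {k R M : Type*} [Field k] [IsAlgClosed k] [Ring R] [Algebra k R] [AddCommGroup M]
  [Module k M] [Module R M] [IsScalarTower k R M] [FiniteDimensional k M] [IsSemisimpleModule R M]

theorem finrank_hom_mul_finrank_le_finrank_isotypicComponent (S : Submodule R M)
    [IsSimpleModule R S] :
    Module.finrank k (S →ₗ[R] M) * Module.finrank k S ≤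
      Module.finrank k (isotypicComponent R M S) := by
  have : FiniteDimensional k (isotypicComponent R M S) :=
    inferInstanceAs (FiniteDimensional k ((isotypicComponent R M S).restrictScalars k))
  have hfin : Module.Finite R (isotypicComponent R M S) :=
    Module.Finite.of_restrictScalars_finite k R _
  have : FiniteDimensional k S := inferInstanceAs (FiniteDimensional k (S.restrictScalars k))
  obtain ⟨n, ⟨e⟩⟩ := (IsIsotypicOfType.isotypicComponent R M S).linearEquiv_fun
  have hC : Module.finrank k (isotypicComponent R M S) = n * Module.finrank k S := by
    rw [(e.restrictScalars k).finrank_eq, Module.finrank_pi_fintype]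
    simp
  have hEnd : Module.finrank k (Module.End R S) = 1 := by
    rw [← (LinearEquiv.ofBijective (Algebra.linearMap k (Module.End R S))
      (IsSimpleModule.algebraMap_end_bijective_of_isAlgClosed k)).finrank_eq, Module.finrank_self]
  have hmem (f : S →ₗ[R] M) (s : S) : f s ∈ isotypicComponent R M S := by
    obtain inj | rfl := f.injective_or_eq_zero
    · have : LinearMap.range f ≤ isotypicComponent R M S :=
        le_sSup ⟨(LinearEquiv.ofInjective f inj).symm⟩
      exact this (LinearMap.mem_range_self f s)
    · simp
  let Φ : (S →ₗ[R] M) →ₗ[k] (Fin n → Module.End R S) :=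
    { toFun := fun f i ↦ LinearMap.proj i ∘ₗ e.toLinearMap ∘ₗ f.codRestrict _ (hmem f)
      map_add' := fun f g ↦ by
        ext i s
        exact congrArg (fun x ↦ ((e x i : S) : M))
          (Subtype.ext rfl : (⟨_, hmem (f + g) s⟩ : isotypicComponent R M S) =
            ⟨f s, hmem f s⟩ + ⟨g s, hmem g s⟩) |>.trans (by rw [map_add]; rfl)
      map_smul' := fun c f ↦ by
        ext i s
        exact congrArg (fun x ↦ ((e x i : S) : M))
          (Subtype.ext rfl : (⟨_, hmem (c • f) s⟩ : isotypicComponent R M S) =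
            c • ⟨f s, hmem f s⟩) |>.trans
            (by rw [← LinearEquiv.restrictScalars_apply k, map_smul]; rfl) }
  have hΦ : Function.Injective Φ := by
    intro f g h
    ext s
    have : e ⟨f s, hmem f s⟩ = e ⟨g s, hmem g s⟩ := by
      ext i : 1
      exact LinearMap.congr_fun (congrFun h i) s
    exact congrArg Subtype.val (e.injective this)
  have : FiniteDimensional k (Module.End R S) := Module.finite_of_finrank_eq_succ hEnd
  have hle := LinearMap.finrank_le_finrank_of_injective hΦ
  rw [Module.finrank_pi_fintype] at hle
  rw [hC]
  gcongr
  simpa [hEnd] using hle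

theorem sum_finrank_hom_mul_finrank_le_finrank {ι : Type*} [Fintype ι] (S : ι → Type*)
    [∀ i, AddCommGroup (S i)] [∀ i, Module k (S i)] [∀ i, Module R (S i)]
    [∀ i, IsScalarTower k R (S i)] [∀ i, IsSimpleModule R (S i)]
    (hS : ∀ i j, Nonempty (S i ≃ₗ[R] S j) → i = j) (hne : ∀ i, ∃ f : S i →ₗ[R] M, f ≠ 0) :
    ∑ i, Module.finrank k (S i →ₗ[R] M) * Module.finrank k (S i) ≤ Module.finrank k M := by
  choose f hf using hne
  have hinj (i) : Function.Injective (f i) := (f i).injective_of_ne_zero (hf i)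
  let L (i) : Submodule R M := LinearMap.range (f i)
  let e (i) : S i ≃ₗ[R] L i := LinearEquiv.ofInjective (f i) (hinj i)
  have hsimple (i) : IsSimpleModule R (L i) := IsSimpleModule.congr (e i).symm
  let C (i) : Submodule R M := isotypicComponent R M (L i)
  have hC : Function.Injective C := by
    intro i j hij
    have : IsIsotypicOfType R (C i) (L j) := by
      rw [hij]
      exact IsIsotypicOfType.isotypicComponent R M (L j)
    obtain ⟨e'⟩ := isIsotypicOfType_submodule_iff.1 this (L i) (L i).le_isotypicComponent
    exact hS i j ⟨(e i).trans (e'.trans (e j).symm)⟩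
  have hind : iSupIndep C :=
    ((sSupIndep_iff _).1 (sSupIndep_isotypicComponents R M)).comp
      (f := fun i ↦ (⟨C i, L i, hsimple i, rfl⟩ : isotypicComponents R M))
      fun i j h ↦ hC (congrArg Subtype.val h)
  have hfin (N : Submodule R M) : FiniteDimensional k N :=
    inferInstanceAs (FiniteDimensional k (N.restrictScalars k))
  have hle := LinearMap.finrank_le_finrank_of_injective (R := k)
    (f := ((DFinsupp.lsum ℕ fun i ↦ (C i).subtype).restrictScalars k) ∘ₗ
      (DFinsupp.linearEquivFunOnFintype (R := k) (M := fun i ↦ C i)).symm.toLinearMap)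
    (by rw [LinearMap.coe_comp]; exact hind.dfinsupp_lsum_injective.comp (LinearEquiv.injective _))
  rw [Module.finrank_pi_fintype] at hle
  refine (Finset.sum_le_sum fun i _ ↦ ?_).trans hle
  have h1 : Module.finrank k (S i →ₗ[R] M) = Module.finrank k (L i →ₗ[R] M) :=
    LinearEquiv.finrank_eq
      { toFun := fun g ↦ g ∘ₗ (e i).symm.toLinearMap
        invFun := fun g ↦ g ∘ₗ (e i).toLinearMap
        map_add' := fun _ _ ↦ rfl
        map_smul' := fun _ _ ↦ rfl
        left_inv := fun g ↦ by ext; simp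
        right_inv := fun g ↦ by ext; simp }
  rw [h1, ((e i).restrictScalars k).finrank_eq]
  exact finrank_hom_mul_finrank_le_finrank_isotypicComponent (L i)

end IsotypicDimension

namespace Representation

variable {G V W : Type*} [Group G] {N : Subgroup G} [N.Normal]
  [AddCommGroup V] [Module ℂ V] [AddCommGroup W] [Module ℂ W]

/-- The restriction of a representation to a subgroup. -/
abbrev restrict (ρ : Representation ℂ G V) (N : Subgroup G) : Representation ℂ N V :=
  MonoidHom.comp ρ N.subtype

/-- The representation `n ↦ ψ (g⁻¹ * n * g)` of the normal subgroup `N`. -/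
abbrev conjugateBy (ψ : Representation ℂ N W) (g : G) : Representation ℂ N W :=
  MonoidHom.comp ψ (MulAut.conjNormal g⁻¹ : MulAut N).toMonoidHom

/-- The pairs `(g, A)`, where `A` has determinant one and is an isomorphism from `ψ` to its
conjugate by `g⁻¹`. -/
def inertiaCover (ψ : Representation ℂ N W) : Subgroup (G × (W ≃ₗ[ℂ] W)) where
  carrier := {p | LinearMap.det (p.2 : W →ₗ[ℂ] W) = 1 ∧
    ∀ n w, p.2 (ψ n w) = ψ (MulAut.conjNormal p.1 n) (p.2 w)}
  one_mem' := by simp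
  mul_mem' {p q} hp hq := by
    refine ⟨?_, fun n w ↦ ?_⟩
    · change LinearMap.det ((p.2 : W →ₗ[ℂ] W) * (q.2 : W →ₗ[ℂ] W)) = 1
      rw [map_mul, hp.1, hq.1, one_mul]
    · change p.2 (q.2 _) = _
      rw [hq.2, hp.2]
      simp
  inv_mem' {p} hp := by
    refine ⟨?_, fun n w ↦ p.2.injective ?_⟩
    · change LinearMap.det ((p.2.symm : W →ₗ[ℂ] W)) = 1
      have := LinearEquiv.det_symm_mul_det p.2
      rwa [hp.1, mul_one] at this
    · change p.2 (p.2.symm _) = p.2 _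
      rw [hp.2]
      change _ = ψ _ (p.2 (p.2.symm _))
      simp

/-- The action of the inertia cover of `ψ` on the multiplicity space of `ψ` in `ρ`. -/
def multiplicityRep (ρ : Representation ℂ G V) (ψ : Representation ℂ N W) :
    Representation ℂ ψ.inertiaCover (IntertwiningMap ψ (ρ.restrict N)) where
  toFun h :=
    { toFun f := ⟨ρ h.1.1 ∘ₗ f.toLinearMap ∘ₗ (h⁻¹).1.2.toLinearMap, fun n ↦ by
        ext w
        change ρ h.1.1 (f ((h⁻¹).1.2 (ψ n w))) = ρ n (ρ h.1.1 (f ((h⁻¹).1.2 w)))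
        rw [(h⁻¹).2.2, f.isIntertwining]
        change ρ h.1.1 (ρ _ _) = _
        rw [← Module.End.mul_apply, ← Module.End.mul_apply, ← map_mul, ← map_mul]
        congr 2
        simp [mul_assoc]⟩
      map_add' f f' := by ext; simp
      map_smul' c f := by ext; simp }
  map_one' := by ext; simp
  map_mul' h h' := by ext; simp

/-- The inertia group of `ψ`. -/
def inertia (ψ : Representation ℂ N W) : Subgroup G :=
  ψ.inertiaCover.map (MonoidHom.fst _ _)

section FiniteDimensional

variable [FiniteDimensional ℂ W] (ρ : Representation ℂ G V) (ψ : Representation ℂ N W)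

theorem mem_inertia [IsIrreducible ψ] {g : G} (A : W ≃ₗ[ℂ] W)
    (hA : ∀ n w, A (ψ n w) = ψ (MulAut.conjNormal g n) (A w)) : g ∈ ψ.inertia := by
  have := IsIrreducible.nontrivial ψ
  have hd : Module.finrank ℂ W ≠ 0 := Module.finrank_pos.ne'
  obtain ⟨c, hc⟩ := IsAlgClosed.exists_pow_nat_eq (LinearMap.det (A : W →ₗ[ℂ] W))⁻¹
    (Module.finrank_pos (R := ℂ) (M := W))
  have hdet : LinearMap.det (A : W →ₗ[ℂ] W) ≠ 0 := A.isUnit_det'.ne_zero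
  have hc0 : c ≠ 0 := by
    rintro rfl
    rw [zero_pow hd] at hc
    exact inv_ne_zero hdet hc.symm
  refine ⟨(g, A.trans (LinearEquiv.smulOfNeZero ℂ W c hc0)), ⟨?_, fun n w ↦ ?_⟩, rfl⟩
  · change LinearMap.det (c • (A : W →ₗ[ℂ] W)) = 1
    rw [LinearMap.det_smul, hc, inv_mul_cancel₀ hdet]
  · change c • A _ = ψ _ (c • A w)
    rw [hA, map_smul]

theorem finite_inertiaCover [Finite G] [IsIrreducible ψ] : Finite ψ.inertiaCover := by
  have := IsIrreducible.nontrivial ψ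
  let π : ψ.inertiaCover → G := fun h ↦ h.1.1
  let s : ψ.inertiaCover → ψ.inertiaCover := fun h ↦ Function.invFun π (π h)
  have hs (h) : π (s h) = π h := Function.invFun_eq ⟨h, rfl⟩
  let R := {c : ℂ // c ∈ Polynomial.nthRoots (Module.finrank ℂ W) (1 : ℂ)}
  have hc (h : ψ.inertiaCover) : ∃ c : R,
      c.1 • (1 : Module.End ℂ W) = ((s h)⁻¹ * h).1.2.toLinearMap := by
    have h1 : ((s h)⁻¹ * h).1.1 = 1 := by
      change (π (s h))⁻¹ * π h = 1
      rw [hs, inv_mul_cancel]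
    obtain ⟨c, hc⟩ := ψ.exists_smul_eq_of_commute ((s h)⁻¹ * h).1.2.toLinearMap fun n w ↦ by
      refine (((s h)⁻¹ * h).2.2 n w).trans ?_
      rw [h1, map_one]
      rfl
    refine ⟨⟨c, ?_⟩, hc⟩
    rw [Polynomial.mem_nthRoots Module.finrank_pos]
    have hdet := ((s h)⁻¹ * h).2.1
    rwa [← hc, LinearMap.det_smul, map_one, mul_one] at hdet
  choose c hc using hc
  refine Finite.of_injective (fun h ↦ (π h, c h)) fun p q hpq ↦ ?_
  obtain ⟨h1, h2⟩ := Prod.ext_iff.1 hpq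
  have hspq : s p = s q := congrArg (Function.invFun π) h1
  have h3 : ((s p)⁻¹ * p).1.2 = ((s q)⁻¹ * q).1.2 :=
    LinearEquiv.toLinearMap_injective (by rw [← hc, ← hc]; exact congrArg (fun c : R ↦ c.1 • _) h2)
  rw [hspq] at h3
  exact Subtype.ext (Prod.ext h1 (mul_left_cancel h3))

theorem le_inertia [Finite G] [IsIrreducible ψ] : N ≤ ψ.inertia := by
  intro m hm
  refine ψ.mem_inertia (LinearEquiv.ofBijective (ψ ⟨m, hm⟩)
    (ψ.apply_bijective _)) fun n w ↦ ?_
  change ψ _ (ψ _ _) = ψ _ (ψ _ _)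
  rw [← Module.End.mul_apply, ← Module.End.mul_apply, ← map_mul, ← map_mul]
  congr 2
  ext
  simp

theorem exists_smul_eq_multiplicityRep [IsIrreducible ψ] (h : ψ.inertiaCover) (hN : h.1.1 ∈ N) :
    ∃ c : ℂ, multiplicityRep ρ ψ h = c • 1 := by
  obtain ⟨c, hc⟩ := ψ.exists_smul_eq_of_commute (ψ ⟨h.1.1, hN⟩ ∘ₗ (h⁻¹).1.2.toLinearMap)
    fun n w ↦ by
      change ψ _ ((h⁻¹).1.2 (ψ n w)) = ψ n (ψ _ ((h⁻¹).1.2 w))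
      rw [(h⁻¹).2.2, ← Module.End.mul_apply, ← Module.End.mul_apply, ← map_mul, ← map_mul]
      congr 2
      ext
      simp [mul_assoc]
  refine ⟨c, LinearMap.ext fun f ↦ IntertwiningMap.ext (LinearMap.ext fun w ↦ ?_)⟩
  change ρ h.1.1 (f ((h⁻¹).1.2 w)) = c • f w
  rw [← map_smul]
  have := LinearMap.congr_fun hc w
  change c • w = ψ _ ((h⁻¹).1.2 w) at this
  rw [this, f.isIntertwining]
  rfl

/-- Translation by `g` identifies the multiplicity spaces of `ψ` and of its conjugate by `g`. -/
def intertwiningMapConjugateByEquiv (g : G) :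
    IntertwiningMap (ψ.conjugateBy g) (ρ.restrict N) ≃ₗ[ℂ] IntertwiningMap ψ (ρ.restrict N) where
  toFun f := ⟨ρ g⁻¹ ∘ₗ f.toLinearMap, fun n ↦ by
    ext w
    have h := LinearMap.congr_fun (f.isIntertwining' (MulAut.conjNormal g n)) w
    have hn : (MulAut.conjNormal g⁻¹ : MulAut N) (MulAut.conjNormal g n) = n := by ext; simp
    change f (ψ ((MulAut.conjNormal g⁻¹ : MulAut N) _) w) = ρ _ (f w) at h
    change ρ g⁻¹ (f (ψ n w)) = ρ n (ρ g⁻¹ (f w))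
    rw [hn] at h
    rw [h, ← Module.End.mul_apply, ← Module.End.mul_apply, ← map_mul, ← map_mul]
    congr 2
    simp [mul_assoc]⟩
  invFun f := ⟨ρ g ∘ₗ f.toLinearMap, fun n ↦ by
    ext w
    change ρ g (f (ψ ((MulAut.conjNormal g⁻¹ : MulAut N) n) w)) = ρ n (ρ g (f w))
    rw [f.isIntertwining]
    change ρ g (ρ _ _) = _
    rw [← Module.End.mul_apply, ← Module.End.mul_apply, ← map_mul, ← map_mul]
    congr 2
    simp [mul_assoc]⟩
  map_add' f f' := by ext; simp
  map_smul' c f := by ext; simp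
  left_inv f := by ext; simp
  right_inv f := by ext; simp

variable [FiniteDimensional ℂ V]

theorem index_mul_finrank_le [Finite G] [IsIrreducible ψ]
    (h0 : ∃ f : IntertwiningMap ψ (ρ.restrict N), f ≠ 0) :
    ψ.inertia.index * (Module.finrank ℂ (IntertwiningMap ψ (ρ.restrict N)) * Module.finrank ℂ W) ≤
      Module.finrank ℂ V := by
  have := Fintype.ofFinite (G ⧸ ψ.inertia)
  let S (x : G ⧸ ψ.inertia) : Representation ℂ N W := ψ.conjugateBy x.out
  have hirr (x) : IsIrreducible (S x) :=
    IsIrreducible.comp_of_surjective ψ (MulEquiv.surjective _)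
  have hS (x y : G ⧸ ψ.inertia)
      (h : Nonempty ((S x).asModule ≃ₗ[MonoidAlgebra ℂ N] (S y).asModule)) : x = y := by
    obtain ⟨e⟩ := h
    have he (n : N) (w : W) : e (S x n w) = S y n (e w) :=
      LinearMap.congr_fun
        (((IntertwiningMap.equivLinearMapAsModule _ _).symm e.toLinearMap).isIntertwining' n) w
    rw [← x.out_eq', ← y.out_eq']
    refine (QuotientGroup.eq.2 (ψ.mem_inertia (e.symm.restrictScalars ℂ) fun n w ↦ e.injective ?_))
    have hn : (MulAut.conjNormal y.out⁻¹ : MulAut N) (MulAut.conjNormal y.out n) = n := by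
      ext; simp
    have hn' : (MulAut.conjNormal x.out⁻¹ : MulAut N) (MulAut.conjNormal y.out n) =
        MulAut.conjNormal (x.out⁻¹ * y.out) n := by
      ext; simp
    have h := he (MulAut.conjNormal y.out n) (e.symm w)
    change e (ψ ((MulAut.conjNormal x.out⁻¹ : MulAut N) _) _) =
      ψ ((MulAut.conjNormal y.out⁻¹ : MulAut N) _) (e (e.symm w)) at h
    rw [hn, hn'] at h
    exact (e.apply_symm_apply _).trans (h.trans (congrArg (ψ n) (e.apply_symm_apply w))).symm
  have hne (x) : Module.finrank ℂ ((S x).asModule →ₗ[MonoidAlgebra ℂ N] (ρ.restrict N).asModule) =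
      Module.finrank ℂ (IntertwiningMap ψ (ρ.restrict N)) := by
    rw [← (IntertwiningMap.equivLinearMapAsModule _ _).finrank_eq]
    exact (intertwiningMapConjugateByEquiv ρ ψ x.out).finrank_eq
  have hpos : 0 < Module.finrank ℂ (IntertwiningMap ψ (ρ.restrict N)) :=
    Module.finrank_pos_iff_exists_ne_zero.2 h0
  have hle := sum_finrank_hom_mul_finrank_le_finrank (k := ℂ) (R := MonoidAlgebra ℂ N)
    (M := (ρ.restrict N).asModule) (fun x ↦ (S x).asModule) hS
    fun x ↦ Module.finrank_pos_iff_exists_ne_zero (R := ℂ).1 (by rwa [hne])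
  simp only [hne] at hle
  change ∑ _ : G ⧸ ψ.inertia, _ * Module.finrank ℂ W ≤ Module.finrank ℂ V at hle
  rwa [Finset.sum_const, Finset.card_univ, ← Nat.card_eq_fintype_card, smul_eq_mul] at hle

theorem finrank_le_index_mul [Finite G] [IsIrreducible ρ]
    (X : Subrepresentation (multiplicityRep ρ ψ)) (hX : X.toSubmodule ≠ ⊥) :
    Module.finrank ℂ V ≤
      ψ.inertia.index * (Module.finrank ℂ X.toSubmodule * Module.finrank ℂ W) := by
  have := Fintype.ofFinite (G ⧸ ψ.inertia)
  let ev : X.toSubmodule →ₗ[ℂ] W →ₗ[ℂ] V :=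
    (IntertwiningMap.toLinearMapl ψ (ρ.restrict N)) ∘ₗ X.toSubmodule.subtype
  let Y : Submodule ℂ V := LinearMap.range (TensorProduct.lift ev)
  have hY (f) (hf : f ∈ X.toSubmodule) (w) : f w ∈ Y := ⟨⟨f, hf⟩ ⊗ₜ w, rfl⟩
  have hYdim : Module.finrank ℂ Y ≤ Module.finrank ℂ X.toSubmodule * Module.finrank ℂ W :=
    (LinearMap.finrank_range_le _).trans_eq (Module.finrank_tensorProduct ..)
  have hYT (g) (hg : g ∈ ψ.inertia) : Y.map (ρ g) ≤ Y := by
    obtain ⟨h, hh, rfl⟩ := hg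
    rintro _ ⟨_, ⟨t, rfl⟩, rfl⟩
    induction t with
    | zero => simp
    | add t t' ht ht' =>
      rw [map_add, map_add]
      exact add_mem ht ht'
    | tmul f w =>
      have hw : (h⁻¹).2 (h.2 w) = w := h.2.symm_apply_apply w
      have := hY _ (X.apply_mem_toSubmodule ⟨h, hh⟩ f.2) (h.2 w)
      change ρ h.1 (f.1 ((h⁻¹).2 (h.2 w))) ∈ Y at this
      rwa [hw] at this
  let Φ : (G ⧸ ψ.inertia → Y) →ₗ[ℂ] V := ∑ x, ρ x.out ∘ₗ Y.subtype ∘ₗ LinearMap.proj x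
  have hΦ (g y) (hy : y ∈ Y) : ρ g y ∈ LinearMap.range Φ := by
    obtain ⟨t, ht⟩ := QuotientGroup.mk_out_eq_mul ψ.inertia g
    have hg : g = (QuotientGroup.mk g : G ⧸ ψ.inertia).out * (t : G)⁻¹ := by rw [ht]; group
    refine ⟨Pi.single (QuotientGroup.mk g)
      ⟨ρ (t : G)⁻¹ y, hYT _ (inv_mem t.2) (Submodule.mem_map_of_mem hy)⟩, ?_⟩
    rw [LinearMap.sum_apply, Finset.sum_eq_single (QuotientGroup.mk g)]
    · conv_rhs => rw [hg, map_mul]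
      simp
    · intro x _ hx
      simp [Pi.single_eq_of_ne hx]
    · simp
  let Z : Subrepresentation ρ := ⟨LinearMap.range Φ, fun g v ↦ by
    rintro ⟨y, rfl⟩
    rw [LinearMap.sum_apply, map_sum]
    refine Submodule.sum_mem _ fun x _ ↦ ?_
    change ρ g (ρ x.out (y x)) ∈ _
    rw [← Module.End.mul_apply, ← map_mul]
    exact hΦ _ _ (y x).2⟩
  have hZ : LinearMap.range Φ = ⊤ := by
    obtain h | h := eq_bot_or_eq_top Z
    · obtain ⟨f, hf, hf0⟩ := Submodule.exists_mem_ne_zero_of_ne_bot hX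
      refine absurd (IntertwiningMap.ext (LinearMap.ext fun w ↦ ?_)) hf0
      have hw := hΦ 1 _ (hY f hf w)
      rw [map_one, Module.End.one_apply] at hw
      exact (Submodule.mem_bot ℂ).1 ((congrArg Subrepresentation.toSubmodule h).le hw)
    · exact congrArg Subrepresentation.toSubmodule h
  have hle := LinearMap.finrank_range_le Φ
  rw [hZ, finrank_top, Module.finrank_pi_fintype] at hle
  refine hle.trans ?_
  rw [Finset.sum_const, Finset.card_univ, ← Nat.card_eq_fintype_card, smul_eq_mul]
  exact Nat.mul_le_mul_left _ hYdim

theorem finrank_eq_mul_and_dvd_index [Finite G] [IsIrreducible ρ] [IsIrreducible ψ]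
    (h0 : ∃ f : IntertwiningMap ψ (ρ.restrict N), f ≠ 0) :
    ∃ k : ℕ, Module.finrank ℂ V = k * Module.finrank ℂ W ∧ k ∣ N.index := by
  have := IsIrreducible.nontrivial ψ
  have := finite_inertiaCover ψ
  have : Nontrivial (IntertwiningMap ψ (ρ.restrict N)) := nontrivial_iff_exists_ne 0 |>.2 h0
  have hlow := index_mul_finrank_le ρ ψ h0
  have hidx : 0 < ψ.inertia.index := Nat.pos_of_ne_zero ψ.inertia.index_ne_zero_of_finite
  have hirr : IsIrreducible (multiplicityRep ρ ψ) := by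
    refine .of_forall_eq_top fun X hX ↦ ?_
    have := hlow.trans (finrank_le_index_mul ρ ψ X hX)
    have := Nat.le_of_mul_le_mul_right (Nat.le_of_mul_le_mul_left this hidx) Module.finrank_pos
    exact Submodule.eq_top_of_finrank_eq (le_antisymm (Submodule.finrank_le _) this)
  have hup := finrank_le_index_mul ρ ψ ⊤ (top_ne_bot (α := Submodule ℂ _))
  have htop : Module.finrank ℂ (⊤ : Subrepresentation (multiplicityRep ρ ψ)).toSubmodule =
    Module.finrank ℂ (IntertwiningMap ψ (ρ.restrict N)) := finrank_top ℂ _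
  rw [htop] at hup
  refine ⟨ψ.inertia.index * Module.finrank ℂ (IntertwiningMap ψ (ρ.restrict N)), ?_, ?_⟩
  · rw [mul_assoc]
    exact le_antisymm hup hlow
  · have hdvd := (multiplicityRep ρ ψ).finrank_dvd_index
      (N.comap ((MonoidHom.fst _ _).comp ψ.inertiaCover.subtype))
      fun h hh ↦ exists_smul_eq_multiplicityRep ρ ψ h hh
    rw [Subgroup.index_comap, MonoidHom.range_comp, Subgroup.range_subtype] at hdvd
    rw [← Subgroup.relIndex_mul_index ψ.le_inertia, mul_comm]
    exact mul_dvd_mul_right hdvd _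

end FiniteDimensional

end Representation

theorem FDRep.isIrreducible_of_simple {G : Type} [Group G] (V : FDRep ℂ G)
    [CategoryTheory.Simple V] : Representation.IsIrreducible V.ρ := by
  have : Nontrivial V := by
    by_contra hn
    rw [not_nontrivial_iff_subsingleton] at hn
    refine CategoryTheory.id_nonzero V ?_
    ext v
    exact Subsingleton.elim (α := V) _ _
  refine .of_forall_eq_top fun X hX ↦ ?_
  let i : FDRep.of X.toRepresentation ⟶ V :=
    ⟨FGModuleCat.ofHom X.toSubmodule.subtype, fun g ↦ by ext; rfl⟩
  have hi : Function.Injective i := X.toSubmodule.injective_subtype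
  have : CategoryTheory.Mono i := CategoryTheory.ConcreteCategory.mono_of_injective i hi
  have hi0 : i ≠ 0 := fun h ↦ hX <| (Submodule.eq_bot_iff _).2 fun v hv ↦
    congrArg (fun j : FDRep.of X.toRepresentation ⟶ V ↦ j ⟨v, hv⟩) h
  have := CategoryTheory.isIso_of_mono_of_nonzero hi0
  refine Submodule.eq_top_iff'.2 fun v ↦ ?_
  obtain ⟨x, rfl⟩ := (CategoryTheory.ConcreteCategory.bijective_of_isIso i).2 v
  exact x.2

/-- If `χ ∈ Irr(G)`, `N ⊴ G` and `ψ ∈ Irr(N)` is a constituent of the restriction of `χ`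
to `N`, then `ψ(1)` divides `χ(1)` and `χ(1)/ψ(1)` divides the index `[G : N]`. -/
theorem stmt_13 (G : Type) [Group G] [Fintype G] (N : Subgroup G) [N.Normal]
    (V : FDRep ℂ G) [CategoryTheory.Simple V] (W : FDRep ℂ N) [CategoryTheory.Simple W]
    (hconst : 0 <
      ((Nat.card N : ℂ)⁻¹ *
        ∑ n : N, V.character (n : G) * starRingEnd ℂ (W.character n)).re) :
    ∃ k : ℕ, Module.finrank ℂ V = k * Module.finrank ℂ W ∧ k ∣ N.index := by
  have := V.isIrreducible_of_simple
  have := W.isIrreducible_of_simple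
  have : Invertible (Nat.card N : ℂ) :=
    invertibleOfNonzero (by exact_mod_cast Nat.card_pos.ne')
  refine Representation.finrank_eq_mul_and_dvd_index V.ρ W.ρ ?_
  have hsum : (Nat.card N : ℂ)⁻¹ *
      ∑ n : N, V.character (n : G) * starRingEnd ℂ (W.character n) =
      Module.finrank ℂ (Representation.IntertwiningMap W.ρ (Representation.restrict V.ρ N)) := by
    rw [← Representation.card_inv_mul_sum_char_mul_char_eq_finrank]
    congr 1
    refine Finset.sum_congr rfl fun n _ ↦ ?_
    rw [← Representation.star_character]
    rfl
  rw [hsum] at hconst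
  exact Module.finrank_pos_iff_exists_ne_zero.1 (by exact_mod_cast hconst)
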